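/- arXiv:0710.1178 — 2 statements merged into one kernel-verified Lean document; each statement's English description precedes it below -/
import Mathlib

section
/- Let $(A, \mathfrak{m})$ be a Cohen-Macaulay local ring of dimension $d > 0$ with infinite residue field, $I$ an $\mathfrak{m}$-primary ideal, and $Q$ a minimal reduction of $I$. Then for all $n \geq 0$, $\ell_A(A/I^{n+1}) = e_0 \binom{n+d}{d} - (e_0 - \ell_A(A/I))\binom{n+d-1}{d-1} - \ell_A(S_n)$, where $e_0 = e_0(I)$ is the multiplicity of $I$ and $S_n$ is the degree-$n$ component of the Sally module $S_Q(I)$. -/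
open IsLocalRing Polynomial

/-- A Noetherian local ring is Cohen–Macaulay of dimension `d` iff its Krull dimension
is `d` and there is a regular sequence of length `d` in the maximal ideal. -/
def IsCohenMacaulayLocal (A : Type*) [CommRing A] [IsLocalRing A] (d : ℕ) : Prop :=
  ringKrullDim A = d ∧
    ∃ rs : List A, rs.length = d ∧ (∀ x ∈ rs, x ∈ maximalIdeal A) ∧
      RingTheory.Sequence.IsRegular A rs

/-- `I` is primary to the maximal ideal (i.e. `𝔪`-primary). -/
def IsPrimaryToMax (A : Type*) [CommRing A] [IsLocalRing A] (I : Ideal A) : Prop :=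
  I ≤ maximalIdeal A ∧ maximalIdeal A ≤ I.radical

/-- The `A`-submodule `I·R(I)` of `A[t]`, where `R(I) = A[It]` is the Rees algebra. -/
noncomputable def sallyIR (A : Type*) [CommRing A] (I : Ideal A) : Submodule A A[X] :=
  I • Subalgebra.toSubmodule (reesAlgebra I)

/-- The `A`-submodule `I·T` of `A[t]`, where `T = A[Qt]`. -/
noncomputable def sallyIT (A : Type*) [CommRing A] (I Q : Ideal A) : Submodule A A[X] :=
  I • Subalgebra.toSubmodule (reesAlgebra Q)

/-- The Sally module `S_Q(I) = I·R(I)/I·R(Q)`. -/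
noncomputable abbrev SallyModule (A : Type*) [CommRing A] (I Q : Ideal A) :=
  ↥(sallyIR A I) ⧸ Submodule.comap (sallyIR A I).subtype (sallyIT A I Q)

/-- The length of a module, as the Krull dimension of its submodule lattice. -/
noncomputable def moduleLength (A M : Type*) [CommRing A] [AddCommGroup M]
    [Module A M] : WithBot ℕ∞ :=
  Order.krullDim (Submodule A M)

/-- The degree `n` homogeneous component of the Sally module. -/
noncomputable def sallyComp (A : Type*) [CommRing A] (I Q : Ideal A) (n : ℕ) :
    Submodule A (SallyModule A I Q) :=
  Submodule.map (Submodule.mkQ _)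
    (Submodule.comap (sallyIR A I).subtype
      (Submodule.map (Polynomial.monomial n : A →ₗ[A] A[X]) (I ^ (n + 1))))

/-!
Correcting each of the `d` generators of the minimal reduction `Q` by the later ones, through prime
avoidance, turns them into a regular sequence. The quotients `Qⁿ / Qⁿ⁺¹` are then free over `A / Q`
on the monomials of degree `n`. Hence `ℓ(A / IQⁿ)` and `ℓ(A / Qⁿ⁺¹)` are explicit combinations of
`ℓ(A / I)` and `ℓ(A / Q)`, while the degree-`n` component of the Sally module is `Iⁿ⁺¹ / IQⁿ`, the
difference between `A / IQⁿ` and `A / Iⁿ⁺¹`.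
Finally `e₀ = ℓ(A / Q)`, because `Iⁿ⁺ʳ = QⁿIʳ` squeezes `ℓ(A / Iⁿ⁺ʳ)` between `ℓ(A / Qⁿ)` and
`ℓ(A / Qⁿ⁺ʳ)`, which have the same leading term.
-/

section RegularElements

open scoped Pointwise

variable {A : Type*} [CommRing A]

theorem exists_mem_forall_add_notMem_of_isPrime {S : Finset (Ideal A)} (hS : ∀ p ∈ S, p.IsPrime)
    {x : A} {I : Ideal A} (hI : ∀ p ∈ S, x ∈ p → ¬ I ≤ p) :
    ∃ c ∈ I, ∀ p ∈ S, x + c ∉ p := by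
  classical
  let T := {p ∈ S | Maximal (· ∈ S) p}
  obtain ⟨c, hc, hcT⟩ : ∃ c ∈ I ⊓ {q ∈ T | x ∉ q}.inf id, ∀ p ∈ T, x ∈ p → c ∉ p := by
    by_contra! hcover
    have hprime : ∀ p ∈ {p ∈ T | x ∈ p}, p.IsPrime := by grind
    obtain ⟨p, hp, hle⟩ := (Ideal.subset_union_prime (s := {p ∈ T | x ∈ p}) (f := id) ⊥ ⊥
      fun p hp _ _ => hprime p hp).mp fun c hc => by simpa [and_assoc] using hcover c hc
    rcases (hprime p hp).inf_le.mp hle with hIp | hinf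
    · grind
    · obtain ⟨q, hq, hqp⟩ := (hprime p hp).inf_le'.mp hinf
      have hpq : p ≤ q := by
        have hqmax : Maximal (· ∈ S) q := by grind
        exact hqmax.le_of_ge (by grind) hqp
      grind
  refine ⟨c, hc.1, fun p hp hxc => ?_⟩
  obtain ⟨m, hpm, hm⟩ := S.exists_le_maximal hp
  have hmT : m ∈ T := Finset.mem_filter.mpr ⟨hm.prop, hm⟩
  by_cases hx : x ∈ m
  · exact hcT m hmT hx ((m.add_mem_iff_right hx).mp (hpm hxc))
  · have hcm : c ∈ m := Finset.inf_le (f := id) (Finset.mem_filter.mpr ⟨hmT, hx⟩) hc.2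
    exact hx ((m.add_mem_iff_left hcm).mp (hpm hxc))

theorem span_singleton_add_sup_of_mem {a c : A} {J : Ideal A} (hc : c ∈ J) :
    Ideal.span {a + c} ⊔ J = Ideal.span {a} ⊔ J := by
  refine le_antisymm (sup_le ?_ le_sup_right) (sup_le ?_ le_sup_right) <;>
    rw [Ideal.span_singleton_le_iff_mem]
  · exact add_mem (Ideal.mem_sup_left (Ideal.mem_span_singleton_self a)) (Ideal.mem_sup_right hc)
  · exact (Ideal.add_mem_iff_left _ (Ideal.mem_sup_right hc)).mp
      (Ideal.mem_sup_left (Ideal.mem_span_singleton_self _))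

variable {M : Type*} [AddCommGroup M] [Module A M]

theorem notMem_of_isSMulRegular_of_mem_associatedPrimes [IsNoetherianRing A] {z : A}
    (hz : IsSMulRegular M z) {p : Ideal A} (hp : p ∈ associatedPrimes A M) : z ∉ p :=
  fun hzp =>
    (biUnion_associatedPrimes_eq_compl_regular A M).le (Set.mem_biUnion hp hzp) hz

theorem exists_isSMulRegular_add [IsNoetherianRing A] [Module.Finite A M] {x z : A} {J : Ideal A}
    (hz : IsSMulRegular M z)
    (hzJ : z ∈ (Module.annihilator A M ⊔ (Ideal.span {x} ⊔ J)).radical) :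
    ∃ c ∈ J, IsSMulRegular M (x + c) := by
  have hfin := associatedPrimes.finite A M
  obtain ⟨c, hcJ, hc⟩ := exists_mem_forall_add_notMem_of_isPrime (S := hfin.toFinset) (x := x)
    (I := J) (fun p hp => (hfin.mem_toFinset.mp hp).isPrime) fun p hp hxp hJp => by
      rw [hfin.mem_toFinset] at hp
      have hle : Module.annihilator A M ⊔ (Ideal.span {x} ⊔ J) ≤ p :=
        sup_le (Submodule.annihilator_top.ge.trans hp.annihilator_le)
          (sup_le (p.span_singleton_le_iff_mem.mpr hxp) hJp)
      exact notMem_of_isSMulRegular_of_mem_associatedPrimes hz hp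
        (hp.isPrime.radical_le_iff.mpr hle hzJ)
  refine ⟨c, hcJ, ?_⟩
  by_contra hreg
  obtain ⟨p, hp, hmem⟩ := Set.mem_iUnion₂.mp
    ((biUnion_associatedPrimes_eq_compl_regular A M).ge hreg)
  exact hc p (hfin.mem_toFinset.mpr hp) hmem

theorem torsionBySet_eq_bot_iff_exists_isSMulRegular [IsNoetherianRing A] [Module.Finite A M]
    {J : Ideal A} : Submodule.torsionBySet A M J = ⊥ ↔ ∃ z ∈ J, IsSMulRegular M z := by
  constructor
  · intro h
    have hhom : Subsingleton ((A ⧸ J) →ₗ[A] M) := by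
      refine subsingleton_of_forall_eq 0 fun f => ?_
      have hf : f 1 ∈ Submodule.torsionBySet A M J :=
        (Submodule.mem_torsionBySet_iff _ _).mpr fun r => by
          have hr : (r : A) • (1 : A ⧸ J) = 0 := by
            rw [Algebra.smul_def, mul_one]
            exact Ideal.Quotient.eq_zero_iff_mem.mpr r.2
          rw [← map_smul, hr, map_zero]
      rw [h, Submodule.mem_bot] at hf
      ext
      simpa using hf
    simpa [Ideal.annihilator_quotient] using IsSMulRegular.subsingleton_linearMap_iff.mp hhom
  · rintro ⟨z, hzJ, hz⟩
    exact (Submodule.eq_bot_iff _).mpr fun v hv =>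
      hz.right_eq_zero_of_smul ((Submodule.mem_torsionBySet_iff _ _).mp hv ⟨z, hzJ⟩)

theorem exists_isSMulRegular_and_isSMulRegular [IsNoetherianRing A] [Module.Finite A M]
    {N : Type*} [AddCommGroup N] [Module A N] [Module.Finite A N] {J : Ideal A}
    (hM : ∃ z ∈ J, IsSMulRegular M z) (hN : ∃ z ∈ J, IsSMulRegular N z) :
    ∃ z ∈ J, IsSMulRegular M z ∧ IsSMulRegular N z := by
  have htors : Submodule.torsionBySet A (M × N) J = ⊥ := by
    rw [← torsionBySet_eq_bot_iff_exists_isSMulRegular] at hM hN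
    simp only [Submodule.eq_bot_iff, Submodule.mem_torsionBySet_iff] at hM hN ⊢
    exact fun v hv => Prod.ext (hM v.1 fun r => congrArg Prod.fst (hv r))
      (hN v.2 fun r => congrArg Prod.snd (hv r))
  obtain ⟨z, hzJ, hz⟩ := torsionBySet_eq_bot_iff_exists_isSMulRegular.mp htors
  exact ⟨z, hzJ, hz.of_injective (LinearMap.inl A M N) LinearMap.inl_injective,
    hz.of_injective (LinearMap.inr A M N) LinearMap.inr_injective⟩

theorem torsionBySet_quotSMulTop_eq_bot {J : Ideal A} {x y : A} (hyJ : y ∈ J)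
    (hx : IsSMulRegular M x) (hy : IsSMulRegular M y)
    (h : Submodule.torsionBySet A (QuotSMulTop y M) J = ⊥) :
    Submodule.torsionBySet A (QuotSMulTop x M) J = ⊥ := by
  simp only [Submodule.eq_bot_iff, Submodule.mem_torsionBySet_iff, Subtype.forall,
    (Submodule.Quotient.mk_surjective _).forall, ← Submodule.Quotient.mk_smul,
    Submodule.Quotient.mk_eq_zero, Submodule.mem_smul_pointwise_iff_exists, Submodule.mem_top,
    true_and, SetLike.mem_coe] at h ⊢
  intro m hm
  obtain ⟨w, hw⟩ := hm y hyJ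
  obtain ⟨t, ht⟩ := h w fun r hr => by
    obtain ⟨u, hu⟩ := hm r hr
    refine ⟨u, hx ?_⟩
    calc x • y • u = y • r • m := by rw [smul_comm, hu]
      _ = x • r • w := by rw [smul_comm, ← hw, smul_comm]
  refine ⟨t, hy ?_⟩
  calc y • x • t = x • w := by rw [smul_comm, ht]
    _ = y • m := hw

end RegularElements

section LocalRing

open RingTheory.Sequence

variable {A : Type*} [CommRing A] [IsLocalRing A]

theorem IsPrimaryToMax.of_pow_le {I Q : Ideal A} (hI : IsPrimaryToMax A I) (hQI : Q ≤ I) {k : ℕ}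
    (hIQ : I ^ (k + 1) ≤ Q) : IsPrimaryToMax A Q :=
  ⟨hQI.trans hI.1, hI.2.trans <| by
    rw [← Ideal.radical_pow I k.succ_ne_zero]
    exact Ideal.radical_mono hIQ⟩

variable [IsNoetherianRing A]

theorem isWeaklyRegular_cons_cons_swap {M : Type*} [AddCommGroup M] [Module A M]
    [Module.Finite A M] {x y : A} {zs : List A} (hx : x ∈ maximalIdeal A)
    (hy : y ∈ maximalIdeal A) (hzs : ∀ z ∈ zs, z ∈ maximalIdeal A)
    (h : IsWeaklyRegular M (x :: y :: zs)) : IsWeaklyRegular M (y :: x :: zs) :=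
  isWeaklyRegular_of_perm_of_subset_maximalIdeal h (List.Perm.swap _ _ _) (by simp_all)

theorem exists_isWeaklyRegular_cons {M : Type*} [AddCommGroup M] [Module A M]
    [Module.Finite A M] {x y : A} {ys : List A} (hx : x ∈ maximalIdeal A)
    (hxreg : IsSMulRegular M x) (hys : ∀ z ∈ y :: ys, z ∈ maximalIdeal A)
    (hwr : IsWeaklyRegular M (y :: ys)) :
    ∃ zs : List A, zs.length = ys.length ∧ (∀ z ∈ zs, z ∈ maximalIdeal A) ∧
      IsWeaklyRegular M (x :: zs) := by
  induction hn : ys.length generalizing M x y ys with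
  | zero => exact ⟨[], rfl, by simp, by simpa using hxreg⟩
  | succ n ih =>
    obtain ⟨y', t, rfl⟩ := List.exists_cons_of_length_eq_add_one hn
    obtain ⟨hy, ht⟩ := List.forall_mem_cons.mp hys
    obtain ⟨hyreg, hwr'⟩ := (isWeaklyRegular_cons_iff _ _ _).mp hwr
    have hy'reg : IsSMulRegular (QuotSMulTop y M) y' :=
      ((isWeaklyRegular_cons_iff _ _ _).mp hwr').1
    -- A common regular element `z` of `M/xM` and `M/yM` lets us exchange `y` for `z`, then `z`
    -- for `x`.
    obtain ⟨z, hz, hzx, hzy⟩ : ∃ z ∈ maximalIdeal A,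
        IsSMulRegular (QuotSMulTop x M) z ∧ IsSMulRegular (QuotSMulTop y M) z := by
      refine exists_isSMulRegular_and_isSMulRegular ?_ ⟨y', ht y' (by simp), hy'reg⟩
      rw [← torsionBySet_eq_bot_iff_exists_isSMulRegular]
      exact torsionBySet_quotSMulTop_eq_bot hy hxreg hyreg <|
        torsionBySet_eq_bot_iff_exists_isSMulRegular.mpr ⟨y', ht y' (by simp), hy'reg⟩
    obtain ⟨u, hulen, hu, hzu⟩ := ih hz hzy ht hwr' (by simpa using hn)
    obtain ⟨hzreg, hyu⟩ := (isWeaklyRegular_cons_iff _ _ _).mp <|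
      isWeaklyRegular_cons_cons_swap hy hz hu ((isWeaklyRegular_cons_iff _ _ _).mpr ⟨hyreg, hzu⟩)
    have hxz : IsSMulRegular (QuotSMulTop z M) x := by
      have hzx' : IsWeaklyRegular M [z, x] := isWeaklyRegular_cons_cons_swap hx hz (by simp)
        ((isWeaklyRegular_cons_iff _ _ _).mpr ⟨hxreg, by simpa using hzx⟩)
      simpa using ((isWeaklyRegular_cons_iff _ _ _).mp hzx').2
    obtain ⟨v, hvlen, hv, hxv⟩ := ih hx hxz (List.forall_mem_cons.mpr ⟨hy, hu⟩) hyu hulen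
    exact ⟨z :: v, by simpa using hvlen, List.forall_mem_cons.mpr ⟨hz, hv⟩,
      isWeaklyRegular_cons_cons_swap hz hx hv ((isWeaklyRegular_cons_iff _ _ _).mpr ⟨hzreg, hxv⟩)⟩

theorem exists_isWeaklyRegular_ofList_eq {M : Type*} [AddCommGroup M] [Module A M]
    [Module.Finite A M] {as ys : List A} (hlen : as.length = ys.length)
    (has : ∀ x ∈ as, x ∈ maximalIdeal A) (hys : ∀ y ∈ ys, y ∈ maximalIdeal A)
    (hwr : IsWeaklyRegular M ys)
    (hrad : maximalIdeal A ≤ (Module.annihilator A M ⊔ Ideal.ofList as).radical) :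
    ∃ bs : List A, bs.length = as.length ∧ IsWeaklyRegular M bs ∧
      Ideal.ofList bs = Ideal.ofList as := by
  induction as generalizing M ys with
  | nil => exact ⟨[], rfl, IsWeaklyRegular.nil A M, rfl⟩
  | cons a as ih =>
    obtain ⟨y, ys, rfl⟩ := List.exists_cons_of_length_eq_add_one hlen.symm
    obtain ⟨ha, has⟩ := List.forall_mem_cons.mp has
    rw [Ideal.ofList_cons] at hrad
    obtain ⟨c, hc, hreg⟩ := exists_isSMulRegular_add ((isWeaklyRegular_cons_iff _ _ _).mp hwr).1
      (hrad (hys y List.mem_cons_self))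
    have hac : a + c ∈ maximalIdeal A := add_mem ha (Ideal.span_le.mpr has hc)
    have hspan : Ideal.span {a + c} ⊔ Ideal.ofList as = Ideal.span {a} ⊔ Ideal.ofList as :=
      span_singleton_add_sup_of_mem hc
    obtain ⟨zs, hzlen, hzs, hwrz⟩ := exists_isWeaklyRegular_cons hac hreg hys hwr
    have hann : Module.annihilator A M ⊔ Ideal.span {a + c} ≤
        Module.annihilator A (QuotSMulTop (a + c) M) :=
      sup_le (LinearMap.annihilator_le_of_surjective _ (Submodule.mkQ_surjective _))
        ((Ideal.span_singleton_le_iff_mem _).mpr (QuotSMulTop.mem_annihilator _ _))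
    obtain ⟨bs, hblen, hbwr, hbs⟩ := ih (M := QuotSMulTop (a + c) M)
      (by rw [hzlen]; simpa using hlen) has hzs ((isWeaklyRegular_cons_iff _ _ _).mp hwrz).2 <| by
        rw [← hspan, ← sup_assoc] at hrad
        exact hrad.trans (Ideal.radical_mono (sup_le_sup_right hann _))
    exact ⟨(a + c) :: bs, by simpa using hblen, (isWeaklyRegular_cons_iff _ _ _).mpr ⟨hreg, hbwr⟩,
      by rw [Ideal.ofList_cons, hbs, hspan, Ideal.ofList_cons]⟩

theorem IsCohenMacaulayLocal.exists_isWeaklyRegular_ofList_eq_span_range {d : ℕ}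
    (hCM : IsCohenMacaulayLocal A d) {a : Fin d → A}
    (ha : IsPrimaryToMax A (Ideal.span (Set.range a))) :
    ∃ as : List A, as.length = d ∧ IsWeaklyRegular A as ∧
      Ideal.ofList as = Ideal.span (Set.range a) := by
  obtain ⟨-, ys, hlen, hys, hreg⟩ := hCM
  have hofList : Ideal.ofList (List.ofFn a) = Ideal.span (Set.range a) := by
    simp [Ideal.ofList, List.mem_ofFn', Set.range]
  obtain ⟨as, haslen, has, hspan⟩ := exists_isWeaklyRegular_ofList_eq
    (as := List.ofFn a) (by simp [hlen])
    (by simpa using fun i => ha.1 (Ideal.subset_span ⟨i, rfl⟩)) hys hreg.toIsWeaklyRegular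
    (by rw [hofList]; exact ha.2.trans (Ideal.radical_mono le_sup_right))
  exact ⟨as, by simpa using haslen, has, hspan.trans hofList⟩

end LocalRing

/-- The entries of `g` generate `K` and every relation among them has all its coefficients in `Q`:
the classes of the `g i` form an `A ⧸ Q`-basis of `K ⧸ Q * K`, from which lengths of quotients are
computed. Relations are only required over `A`, since those modulo `Q * K` lift to them. -/
structure IsBasisModulo {A ι : Type*} [CommRing A] [Fintype ι] (Q K : Ideal A) (g : ι → A) :
    Prop where
  span_range_eq : Ideal.span (Set.range g) = K
  mem_of_sum_eq_zero : ∀ c : ι → A, ∑ i, c i * g i = 0 → ∀ i, c i ∈ Q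

namespace IsBasisModulo

variable {A ι κ : Type*} [CommRing A] [Fintype ι] [Fintype κ] {Q K I J L : Ideal A} {g : ι → A}

theorem mem_iff_exists_sum (hg : IsBasisModulo Q K g) {x : A} :
    x ∈ K ↔ ∃ c : ι → A, ∑ i, c i * g i = x := by
  rw [← hg.span_range_eq, Ideal.mem_span_range_iff_exists_fun]

theorem mem_mul_iff_exists_sum (hg : IsBasisModulo Q K g) {x : A} :
    x ∈ I * K ↔ ∃ c : ι → A, (∀ i, c i ∈ I) ∧ ∑ i, c i * g i = x := by
  rw [← hg.span_range_eq, ← smul_eq_mul, Ideal.span, Submodule.mem_ideal_smul_span_iff_exists_sum,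
    Finsupp.equivFunOnFinite.symm.surjective.exists]
  simp [Finsupp.sum_fintype]

theorem sum_mem_mul_iff (hg : IsBasisModulo Q K g) (hQI : Q ≤ I) {c : ι → A} :
    ∑ i, c i * g i ∈ I * K ↔ ∀ i, c i ∈ I := by
  refine ⟨fun h i => ?_, fun h => hg.mem_mul_iff_exists_sum.mpr ⟨c, h, rfl⟩⟩
  obtain ⟨b, hb, hsum⟩ := hg.mem_mul_iff_exists_sum.mp h
  have hcb : c i - b i ∈ Q :=
    hg.mem_of_sum_eq_zero (c - b) (by simp [sub_mul, Finset.sum_sub_distrib, hsum]) i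
  exact (I.sub_mem_iff_left (hb i)).mp (hQI hcb)

theorem comp_equiv (hg : IsBasisModulo Q K g) (σ : κ ≃ ι) : IsBasisModulo Q K (g ∘ σ) where
  span_range_eq := by rw [σ.surjective.range_comp, hg.span_range_eq]
  mem_of_sum_eq_zero c hc k := by
    simpa using hg.mem_of_sum_eq_zero (c ∘ σ.symm)
      (by rw [← hc, ← σ.sum_comp]; simp) (σ k)

theorem mono_left (hg : IsBasisModulo J K g) (hJQ : J ≤ Q) : IsBasisModulo Q K g :=
  ⟨hg.span_range_eq, fun c hc i => hJQ (hg.mem_of_sum_eq_zero c hc i)⟩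

theorem sumElim_mul {f : κ → A} {x : A} (hg : IsBasisModulo Q L g) (hf : IsBasisModulo Q K f)
    (hx : x ∈ Q) (hLK : L ≤ Q * K) (hxL : ∀ y, x * y ∈ L → y ∈ L) :
    IsBasisModulo Q (L ⊔ Ideal.span {x} * K) (Sum.elim g fun k => x * f k) where
  span_range_eq := by
    rw [Set.Sum.elim_range, Ideal.span_union, hg.span_range_eq, ← hf.span_range_eq,
      Ideal.span_mul_span', Set.singleton_mul, ← Set.range_comp]
    rfl
  mem_of_sum_eq_zero c hc := by
    let y := ∑ k, c (Sum.inr k) * f k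
    have hsum : ∑ i, c (Sum.inl i) * g i + x * y = 0 := by
      simpa [y, Finset.mul_sum, mul_left_comm] using hc
    have hyL : y ∈ L := hxL y <| by
      rw [eq_neg_of_add_eq_zero_right hsum]
      exact neg_mem (hg.mem_iff_exists_sum.mpr ⟨_, rfl⟩)
    rintro (i | k)
    · obtain ⟨b, hb⟩ := hg.mem_iff_exists_sum.mp hyL
      have hcb : c (Sum.inl i) + x * b i ∈ Q :=
        hg.mem_of_sum_eq_zero (fun i => c (Sum.inl i) + x * b i) (by
          rw [← hsum, ← hb, Finset.mul_sum, ← Finset.sum_add_distrib]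
          exact Finset.sum_congr rfl fun i _ => by ring) i
      exact (Q.add_mem_iff_left (Q.mul_mem_right _ hx)).mp hcb
    · exact (hf.sum_mem_mul_iff le_rfl).mp (hLK hyL) k

end IsBasisModulo

section PowersOfRegularSequence

open RingTheory.Sequence

variable {A : Type*} [CommRing A]

theorem isBasisModulo_one {ι : Type*} [Unique ι] (Q : Ideal A) :
    IsBasisModulo Q 1 fun _ : ι => 1 where
  span_range_eq := by simp
  mem_of_sum_eq_zero c hc i := by simp_all [Unique.eq_default i]

theorem mem_pow_of_mul_mem_pow {J : Ideal A} {x : A} {m : ℕ → ℕ} {g : ∀ n, Fin (m n) → A}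
    (hg : ∀ n, IsBasisModulo J (J ^ n) (g n)) (hx : ∀ y, x * y ∈ J → y ∈ J) (n : ℕ) {y : A}
    (hy : x * y ∈ J ^ n) : y ∈ J ^ n := by
  induction n with
  | zero => simp
  | succ n ih =>
    obtain ⟨c, rfl⟩ := (hg n).mem_iff_exists_sum.mp (ih (Ideal.pow_le_pow_right n.le_succ hy))
    simp only [Finset.mul_sum, ← mul_assoc, pow_succ', (hg n).sum_mem_mul_iff le_rfl] at hy ⊢
    exact fun i => hx _ (hy i)

theorem sup_span_singleton_pow_succ (J : Ideal A) (x : A) (n : ℕ) :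
    (J ⊔ Ideal.span {x}) ^ (n + 1) =
      J ^ (n + 1) ⊔ Ideal.span {x} * (J ⊔ Ideal.span {x}) ^ n := by
  refine le_antisymm ?_ (sup_le (Ideal.pow_right_mono le_sup_left _) ?_)
  · induction n with
    | zero => simp
    | succ n ih =>
      rw [pow_succ', Ideal.sup_mul]
      refine sup_le ((Ideal.mul_mono_right ih).trans ?_) le_sup_right
      rw [Ideal.mul_sup, ← pow_succ', mul_left_comm, pow_succ' (J ⊔ _) n]
      exact sup_le_sup_left (Ideal.mul_mono_right (Ideal.mul_mono_left le_sup_left)) _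
  · rw [pow_succ']
    exact Ideal.mul_mono_left le_sup_right

theorem exists_isBasisModulo_sup_span_singleton_pow {J : Ideal A} {x : A} {r : ℕ}
    (hJ : ∀ n, ∃ g : Fin (r.multichoose n) → A, IsBasisModulo J (J ^ n) g)
    (hx : ∀ y, x * y ∈ J → y ∈ J) (n : ℕ) :
    ∃ g : Fin ((r + 1).multichoose n) → A,
      IsBasisModulo (J ⊔ Ideal.span {x}) ((J ⊔ Ideal.span {x}) ^ n) g := by
  choose g hg using hJ
  induction n with
  | zero =>
    rw [Nat.multichoose_zero_right, pow_zero]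
    exact ⟨_, isBasisModulo_one _⟩
  | succ n ih =>
    obtain ⟨f, hf⟩ := ih
    have hJpow : J ^ (n + 1) ≤ (J ⊔ Ideal.span {x}) * (J ⊔ Ideal.span {x}) ^ n := by
      rw [← pow_succ']
      exact Ideal.pow_right_mono le_sup_left _
    have hsum := ((hg (n + 1)).mono_left le_sup_left).sumElim_mul hf
      (Ideal.mem_sup_right (Ideal.mem_span_singleton_self x)) hJpow
      fun _ => mem_pow_of_mul_mem_pow hg hx (n + 1)
    rw [Nat.multichoose_succ_succ, sup_span_singleton_pow_succ]
    exact ⟨_, hsum.comp_equiv finSumFinEquiv.symm⟩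

theorem exists_isBasisModulo_ofList_pow {as : List A} (has : IsWeaklyRegular A as) (n : ℕ) :
    ∃ g : Fin (as.length.multichoose n) → A,
      IsBasisModulo (Ideal.ofList as) (Ideal.ofList as ^ n) g := by
  induction as using List.reverseRecOn generalizing n with
  | nil =>
    cases n with
    | zero =>
      rw [List.length_nil, Nat.multichoose_zero_right, pow_zero]
      exact ⟨_, isBasisModulo_one _⟩
    | succ n =>
      rw [List.length_nil, Nat.multichoose_zero_succ]
      exact ⟨Fin.elim0, by simp, fun _ _ i => i.elim0⟩
  | append_singleton as x ih =>
    rw [isWeaklyRegular_append_iff, isWeaklyRegular_singleton_iff,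
      isSMulRegular_quotient_iff_mem_of_smul_mem] at has
    rw [Ideal.ofList_append, Ideal.ofList_singleton, List.length_append, List.length_singleton]
    exact exists_isBasisModulo_sup_span_singleton_pow (ih has.1) (by simpa using has.2) n

end PowersOfRegularSequence

theorem multichoose_succ_eq_choose (d n : ℕ) : (d + 1).multichoose n = (n + d).choose d := by
  rw [Nat.multichoose_eq, add_right_comm, Nat.add_sub_cancel, add_comm d, Nat.choose_symm_add]

section Length

open RingTheory.Sequence

variable {A : Type*} [CommRing A]

theorem length_quotient_eq_add_of_le {M : Type*} [AddCommGroup M] [Module A M]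
    {K L : Submodule A M} (h : K ≤ L) :
    Module.length A (M ⧸ K) =
      Module.length A (L ⧸ K.comap L.subtype) + Module.length A (M ⧸ L) := by
  refine Module.length_eq_add_of_exact (Submodule.mapQ _ K L.subtype le_rfl)
    (Submodule.factor h) ?_ (Submodule.factor_surjective h) ?_
  · rw [← LinearMap.ker_eq_bot, Submodule.ker_mapQ]
    exact Submodule.mkQ_map_self _
  · rw [LinearMap.exact_iff, Submodule.range_mapQ, Submodule.factor, Submodule.ker_mapQ]
    simp

theorem length_quotient_antitone {M : Type*} [AddCommGroup M] [Module A M]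
    {K L : Submodule A M} (h : K ≤ L) : Module.length A (M ⧸ L) ≤ Module.length A (M ⧸ K) :=
  Module.length_le_of_surjective _ (Submodule.factor_surjective h)

theorem IsBasisModulo.length_quotient {ι : Type*} [Fintype ι] {Q K I : Ideal A} {g : ι → A}
    (hg : IsBasisModulo Q K g) (hQI : Q ≤ I) :
    Module.length A (K ⧸ Submodule.comap K.subtype (I * K)) =
      Fintype.card ι * Module.length A (A ⧸ I) := by
  classical
  have hgK (i : ι) : g i ∈ K := hg.span_range_eq ▸ Ideal.subset_span ⟨i, rfl⟩
  let φ : (ι → A) →ₗ[A] K := Fintype.linearCombination A fun i => ⟨g i, hgK i⟩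
  have hφ (c : ι → A) : (φ c : A) = ∑ i, c i * g i := by
    simp [φ, Fintype.linearCombination_apply]
  have hsurj : Function.Surjective (Submodule.mkQ (Submodule.comap K.subtype (I * K)) ∘ₗ φ) := by
    refine (Submodule.mkQ_surjective _).comp fun x => ?_
    obtain ⟨c, hc⟩ := hg.mem_iff_exists_sum.mp x.2
    exact ⟨c, Subtype.ext ((hφ c).trans hc)⟩
  have hker : LinearMap.ker (Submodule.mkQ (Submodule.comap K.subtype (I * K)) ∘ₗ φ) =
      Submodule.pi Set.univ fun _ => I := by
    ext c
    rw [LinearMap.ker_comp, Submodule.ker_mkQ, Submodule.mem_comap, Submodule.mem_comap,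
      Submodule.subtype_apply, hφ, hg.sum_mem_mul_iff hQI]
    simp
  rw [← (LinearMap.quotKerEquivOfSurjective _ hsurj).length_eq,
    (Submodule.quotEquivOfEq _ _ hker).length_eq, (Submodule.quotientPi _).length_eq]
  simp

theorem IsBasisModulo.length_quotient_mul {ι : Type*} [Fintype ι] {Q K I : Ideal A} {g : ι → A}
    (hg : IsBasisModulo Q K g) (hQI : Q ≤ I) :
    Module.length A (A ⧸ I * K) =
      Fintype.card ι * Module.length A (A ⧸ I) + Module.length A (A ⧸ K) := by
  rw [length_quotient_eq_add_of_le Ideal.mul_le_right, hg.length_quotient hQI]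

theorem length_quotient_mul_ofList_pow {as : List A} (has : IsWeaklyRegular A as) {I : Ideal A}
    (hI : Ideal.ofList as ≤ I) (n : ℕ) :
    Module.length A (A ⧸ I * Ideal.ofList as ^ n) =
      as.length.multichoose n * Module.length A (A ⧸ I) +
        Module.length A (A ⧸ Ideal.ofList as ^ n) := by
  obtain ⟨g, hg⟩ := exists_isBasisModulo_ofList_pow has n
  rw [hg.length_quotient_mul hI, Fintype.card_fin]

theorem length_quotient_ofList_pow_succ {as : List A} (has : IsWeaklyRegular A as) (n : ℕ) :
    Module.length A (A ⧸ Ideal.ofList as ^ (n + 1)) =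
      (n + as.length).choose as.length * Module.length A (A ⧸ Ideal.ofList as) := by
  induction n with
  | zero => rw [zero_add, pow_one]; simp
  | succ n ih =>
    have hchoose : (as.length.multichoose (n + 1) + (n + as.length).choose as.length : ℕ) =
        (n + 1 + as.length).choose as.length := by
      rw [← multichoose_succ_eq_choose, ← multichoose_succ_eq_choose, Nat.multichoose_succ_succ]
    rw [pow_succ', length_quotient_mul_ofList_pow has le_rfl, ih, ← add_mul, ← Nat.cast_add,
      hchoose]

end Length

section Sally

variable {A : Type*} [CommRing A] {I Q : Ideal A} {n : ℕ}

theorem coeff_mem_of_mem_smul_reesAlgebra {p : A[X]}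
    (hp : p ∈ I • Subalgebra.toSubmodule (reesAlgebra Q)) (n : ℕ) : p.coeff n ∈ I * Q ^ n := by
  induction hp using Submodule.smul_induction_on' with
  | smul r hr f hf =>
    rw [coeff_smul, smul_eq_mul]
    exact Ideal.mul_mem_mul hr ((mem_reesAlgebra_iff Q f).mp hf n)
  | add f _ g _ hf hg =>
    rw [coeff_add]
    exact add_mem hf hg

theorem monomial_mem_smul_reesAlgebra_iff {c : A} :
    monomial n c ∈ I • Subalgebra.toSubmodule (reesAlgebra Q) ↔ c ∈ I * Q ^ n := by
  refine ⟨fun h => by simpa using coeff_mem_of_mem_smul_reesAlgebra h n, fun h => ?_⟩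
  induction h using Submodule.mul_induction_on' with
  | mem_mul_mem r hr b hb =>
    rw [← smul_eq_mul, ← smul_monomial]
    exact Submodule.smul_mem_smul hr (reesAlgebra.monomial_mem.mpr hb)
  | add x _ y _ hx hy =>
    rw [map_add]
    exact add_mem hx hy

theorem monomial_mem_sallyIR_iff {c : A} : monomial n c ∈ sallyIR A I ↔ c ∈ I ^ (n + 1) := by
  rw [sallyIR, monomial_mem_smul_reesAlgebra_iff, pow_succ']

/-- The parametrization of the degree-`n` component of the Sally module by `I ^ (n + 1)`, sending
`c` to the class of `c tⁿ`. -/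
noncomputable def sallyMonomial (I Q : Ideal A) (n : ℕ) : ↥(I ^ (n + 1)) →ₗ[A] SallyModule A I Q :=
  Submodule.mkQ _ ∘ₗ LinearMap.restrict (monomial n) fun _ => monomial_mem_sallyIR_iff.mpr

theorem range_sallyMonomial (I Q : Ideal A) (n : ℕ) :
    LinearMap.range (sallyMonomial I Q n) = sallyComp A I Q n := by
  rw [sallyMonomial, LinearMap.range_comp, sallyComp]
  congr 1
  ext p
  simp

theorem ker_sallyMonomial (I Q : Ideal A) (n : ℕ) :
    LinearMap.ker (sallyMonomial I Q n) = Submodule.comap (I ^ (n + 1)).subtype (I * Q ^ n) := by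
  ext c
  rw [sallyMonomial, LinearMap.ker_comp, Submodule.ker_mkQ]
  exact monomial_mem_smul_reesAlgebra_iff

theorem length_quotient_mul_pow_eq_length_sallyComp_add (hQI : Q ≤ I) (n : ℕ) :
    Module.length A (A ⧸ I * Q ^ n) =
      Module.length A (sallyComp A I Q n) + Module.length A (A ⧸ I ^ (n + 1)) := by
  have hle : I * Q ^ n ≤ I ^ (n + 1) := by
    rw [pow_succ']
    exact Ideal.mul_mono_right (Ideal.pow_right_mono hQI n)
  rw [length_quotient_eq_add_of_le hle, ← ker_sallyMonomial,
    (sallyMonomial I Q n).quotKerEquivRange.length_eq, range_sallyMonomial]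

end Sally

section Growth

open Filter Topology

theorem tendsto_choose_add_div_pow (k c : ℕ) :
    Tendsto (fun n : ℕ => ((n + c).choose k : ℝ) / n ^ k) atTop (𝓝 (1 / k.factorial)) := by
  have hchoose : Tendsto (fun n : ℕ => ((n + c).choose k : ℝ) / ((n + c : ℕ) : ℝ) ^ k) atTop
      (𝓝 (1 / k.factorial)) := by
    refine (tendsto_add_atTop_iff_nat (f := fun n : ℕ => (n.choose k : ℝ) / (n : ℝ) ^ k) c).mpr ?_
    refine ((isEquivalent_choose k).div .refl).symm.tendsto_nhds (tendsto_const_nhds.congr' ?_)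
    filter_upwards [eventually_ne_atTop 0] with n hn
    simp [div_div_cancel_left', hn]
  have hratio := (tendsto_natCast_div_add_atTop (c : ℝ)).pow k
  have hprod := hchoose.div hratio (by simp)
  rw [one_pow, div_one] at hprod
  refine hprod.congr' ?_
  filter_upwards [eventually_ne_atTop 0] with n hn
  have hnc : (n + c : ℝ) ≠ 0 := by positivity
  simp [div_pow, div_div_div_cancel_right₀, hnc]

theorem tendsto_choose_add_div_pow_of_lt {k d : ℕ} (hkd : k < d) (c : ℕ) :
    Tendsto (fun n : ℕ => ((n + c).choose k : ℝ) / n ^ d) atTop (𝓝 0) := by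
  have hinv : Tendsto (fun n : ℕ => ((n : ℝ) ^ (d - k))⁻¹) atTop (𝓝 0) :=
    ((tendsto_pow_atTop (Nat.sub_ne_zero_of_lt hkd)).comp
      tendsto_natCast_atTop_atTop).inv_tendsto_atTop
  have hprod := (tendsto_choose_add_div_pow k c).mul hinv
  rw [mul_zero] at hprod
  refine hprod.congr fun n => ?_
  rw [← div_eq_mul_inv, div_div, ← pow_add, Nat.add_sub_cancel' hkd.le]

theorem tendsto_sum_mul_choose_add_div_pow (d : ℕ) (e : ℕ → ℤ) (c : ℕ → ℕ) :
    Tendsto (fun n : ℕ =>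
      ((∑ i ∈ Finset.range (d + 1), (-1) ^ i * e i * ((n + c i).choose (d - i) : ℤ) : ℤ) : ℝ) /
        n ^ d) atTop (𝓝 (e 0 / d.factorial)) := by
  have hhead : Tendsto (fun n : ℕ => (e 0 : ℝ) * (((n + c 0).choose d : ℝ) / n ^ d)) atTop
      (𝓝 (e 0 * (1 / d.factorial))) :=
    (tendsto_choose_add_div_pow d (c 0)).const_mul _
  have htail : Tendsto (fun n : ℕ => ∑ i ∈ Finset.range d, ((-1) ^ (i + 1) * e (i + 1) : ℝ) *
      (((n + c (i + 1)).choose (d - (i + 1)) : ℝ) / n ^ d)) atTop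
      (𝓝 (∑ i ∈ Finset.range d, ((-1) ^ (i + 1) * e (i + 1) : ℝ) * 0)) :=
    tendsto_finsetSum _ fun i hi => (tendsto_choose_add_div_pow_of_lt
      (by have := Finset.mem_range.mp hi; lia) _).const_mul _
  have hsum := htail.add hhead
  simp only [mul_zero, Finset.sum_const_zero, zero_add, mul_one_div] at hsum
  refine hsum.congr fun n => ?_
  rw [Finset.sum_range_succ']
  push_cast
  simp [add_div, Finset.sum_div, mul_div_assoc]

theorem leadingCoeff_eq_of_choose_mul_le {d r N q : ℕ} {H : ℕ → ℕ} {e : ℕ → ℤ}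
    (hHS : ∀ n ≥ N, (H n : ℤ) =
      ∑ i ∈ Finset.range (d + 1), (-1) ^ i * e i * ((n + d - i).choose (d - i) : ℤ))
    (hlower : ∀ n, (n + d).choose d * q ≤ H (n + r))
    (hupper : ∀ n, H n ≤ (n + d).choose d * q) : e 0 = q := by
  have hchoose (c : ℕ) : Tendsto (fun n : ℕ => (((n + c).choose d * q : ℕ) : ℝ) / n ^ d) atTop
      (𝓝 (q / d.factorial)) := by
    have h := (tendsto_choose_add_div_pow d c).mul_const (q : ℝ)
    rw [one_div_mul_eq_div] at h
    refine h.congr fun n => ?_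
    rw [Nat.cast_mul, div_mul_eq_mul_div]
  have hH : Tendsto (fun n : ℕ => (H (n + r) : ℝ) / n ^ d) atTop (𝓝 (e 0 / d.factorial)) := by
    refine (tendsto_sum_mul_choose_add_div_pow d e fun i => r + d - i).congr' ?_
    filter_upwards [eventually_ge_atTop N] with n hn
    rw [← Int.cast_natCast (H (n + r)), hHS (n + r) (by lia)]
    congr 2
    refine Finset.sum_congr rfl fun i hi => ?_
    have := Finset.mem_range.mp hi
    rw [show n + r + d - i = n + (r + d - i) by lia]
  have hlim : (e 0 / d.factorial : ℝ) = q / d.factorial := by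
    refine tendsto_nhds_unique hH (tendsto_of_tendsto_of_tendsto_of_le_of_le (hchoose d)
      (hchoose (r + d)) (fun n => ?_) fun n => ?_)
    · exact div_le_div_of_nonneg_right (Nat.cast_le.mpr (hlower n)) (by positivity)
    · refine div_le_div_of_nonneg_right ?_ (by positivity)
      rw [← add_assoc]
      exact Nat.cast_le.mpr (hupper (n + r))
  have hfact : (d.factorial : ℝ) ≠ 0 := by positivity
  exact_mod_cast (div_left_inj' hfact).mp hlim

end Growth

section HilbertFunction

open RingTheory.Sequence

theorem pow_add_eq_pow_mul {M : Type*} [Monoid M] {x y : M} {r : ℕ} (h : x ^ (r + 1) = y * x ^ r)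
    (n : ℕ) : x ^ (n + r) = y ^ n * x ^ r := by
  induction n with
  | zero => simp
  | succ n ih =>
    rw [add_right_comm, pow_succ, ih, mul_assoc, ← pow_succ, h, ← mul_assoc, ← pow_succ]

variable {A : Type*} [CommRing A]

theorem length_eq_of_moduleLength_eq {M : Type*} [AddCommGroup M] [Module A M] {k : ℕ}
    (h : moduleLength A M = (k : ℕ∞)) : Module.length A M = k := by
  rw [moduleLength, ← Module.coe_length] at h
  exact_mod_cast h

variable {as : List A} {I : Ideal A}

theorem length_sallyComp_add_length_quotient_add (has : IsWeaklyRegular A as)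
    (hI : Ideal.ofList as ≤ I) (n : ℕ) :
    Module.length A (sallyComp A I (Ideal.ofList as) n) + Module.length A (A ⧸ I ^ (n + 1)) +
        as.length.multichoose n * Module.length A (A ⧸ Ideal.ofList as) =
      (n + as.length).choose as.length * Module.length A (A ⧸ Ideal.ofList as) +
        as.length.multichoose n * Module.length A (A ⧸ I) := by
  rw [← length_quotient_mul_pow_eq_length_sallyComp_add hI, length_quotient_mul_ofList_pow has hI,
    ← length_quotient_ofList_pow_succ has, pow_succ', length_quotient_mul_ofList_pow has le_rfl]
  ring

theorem exists_length_quotient_eq_and_leadingCoeff_eq (has : IsWeaklyRegular A as)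
    (hI : Ideal.ofList as ≤ I) (hred : ∃ r : ℕ, I ^ (r + 1) = Ideal.ofList as * I ^ r)
    {H : ℕ → ℕ} (hH : ∀ n, Module.length A (A ⧸ I ^ (n + 1)) = H n) {e : ℕ → ℤ} {N : ℕ}
    (hHS : ∀ n ≥ N, (H n : ℤ) = ∑ i ∈ Finset.range (as.length + 1),
      (-1) ^ i * e i * ((n + as.length - i).choose (as.length - i) : ℤ)) :
    ∃ q : ℕ, Module.length A (A ⧸ Ideal.ofList as) = q ∧ e 0 = q := by
  obtain ⟨r, hr⟩ := hred
  have hfin : Module.length A (A ⧸ Ideal.ofList as) ≠ ⊤ := by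
    have hle : Module.length A (A ⧸ Ideal.ofList as) ≤ H r :=
      hH r ▸ length_quotient_antitone (hr.trans_le Ideal.mul_le_left)
    exact ne_top_of_le_ne_top (ENat.natCast_ne_top _) hle
  obtain ⟨q, hq⟩ := ENat.ne_top_iff_exists.mp hfin
  have hQ (n : ℕ) : Module.length A (A ⧸ Ideal.ofList as ^ (n + 1)) =
      ((n + as.length).choose as.length * q : ℕ) := by
    rw [length_quotient_ofList_pow_succ has, ← hq, Nat.cast_mul]
  refine ⟨q, hq.symm, leadingCoeff_eq_of_choose_mul_le (r := r) hHS (fun n => ?_) fun n => ?_⟩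
  · have hle : I ^ (n + r + 1) ≤ Ideal.ofList as ^ (n + 1) := by
      rw [add_right_comm, pow_add_eq_pow_mul hr]
      exact Ideal.mul_le_left
    simpa only [hH, hQ, Nat.cast_le] using length_quotient_antitone hle
  · have hle : Ideal.ofList as ^ (n + 1) ≤ I ^ (n + 1) := Ideal.pow_right_mono hI _
    simpa only [hH, hQ, Nat.cast_le] using length_quotient_antitone hle

end HilbertFunction

theorem hilbert_function_via_sally_general {A : Type*} [CommRing A] {d : ℕ} (hd : 0 < d)
    {as : List A} (has : RingTheory.Sequence.IsWeaklyRegular A as) (hlen : as.length = d)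
    {I : Ideal A} (hI : Ideal.ofList as ≤ I)
    (hred : ∃ r : ℕ, I ^ (r + 1) = Ideal.ofList as * I ^ r)
    {H s : ℕ → ℕ} (hH : ∀ n : ℕ, moduleLength A (A ⧸ I ^ (n + 1)) = (H n : ℕ∞))
    (hs : ∀ n : ℕ, moduleLength A ↥(sallyComp A I (Ideal.ofList as) n) = (s n : ℕ∞))
    {e : ℕ → ℤ} {N : ℕ}
    (hHS : ∀ n ≥ N, (H n : ℤ) =
      ∑ i ∈ Finset.range (d + 1),
        (-1) ^ i * e i * ((n + d - i).choose (d - i) : ℤ)) (n : ℕ) :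
    (H n : ℤ) =
      e 0 * ((n + d).choose d : ℤ) -
        (e 0 - (H 0 : ℤ)) * ((n + d - 1).choose (d - 1) : ℤ) - (s n : ℤ) := by
  subst hlen
  have hlenI (n : ℕ) := length_eq_of_moduleLength_eq (hH n)
  obtain ⟨q, hq, he⟩ := exists_length_quotient_eq_and_leadingCoeff_eq has hI hred hlenI hHS
  have hmulti : as.length.multichoose n = (n + as.length - 1).choose (as.length - 1) := by
    obtain ⟨k, hk⟩ := Nat.exists_eq_add_of_le' hd
    rw [hk, multichoose_succ_eq_choose, ← add_assoc, Nat.add_sub_cancel, Nat.add_sub_cancel]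
  have hlenI₀ : Module.length A (A ⧸ I) = H 0 := by
    have h := hlenI 0
    rwa [zero_add, pow_one] at h
  have hsum : s n + H n + as.length.multichoose n * q =
      (n + as.length).choose as.length * q + as.length.multichoose n * H 0 := by
    have h := length_sallyComp_add_length_quotient_add has hI n
    rw [length_eq_of_moduleLength_eq (hs n), hlenI, hlenI₀, hq] at h
    exact_mod_cast h
  rw [he, ← hmulti]
  zify at hsum
  linarith

/-- `ℓ_A(A/I^{n+1}) = e₀·C(n+d,d) - (e₀ - ℓ_A(A/I))·C(n+d-1,d-1) - ℓ_A(S_n)` for all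
`n ≥ 0`, where `e₀ = e₀(I)` and `S_n` is the degree `n` part of the Sally module.
The Hilbert coefficients `e i` are specified by the Hilbert–Samuel polynomial. -/
theorem hilbert_function_via_sally (A : Type*) [CommRing A] [IsLocalRing A]
    [IsNoetherianRing A] [Infinite (ResidueField A)]
    (d : ℕ) (hd : 0 < d) (hCM : IsCohenMacaulayLocal A d)
    (I Q : Ideal A) (hI : IsPrimaryToMax A I)
    (a : Fin d → A) (hQ : Q = Ideal.span (Set.range a)) (hQI : Q ≤ I)
    (hred : ∃ r : ℕ, I ^ (r + 1) = Q * I ^ r)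
    (H s : ℕ → ℕ)
    (hH : ∀ n : ℕ, moduleLength A (A ⧸ I ^ (n + 1)) = (H n : ℕ∞))
    (hs : ∀ n : ℕ, moduleLength A ↥(sallyComp A I Q n) = (s n : ℕ∞))
    (e : ℕ → ℤ) (N : ℕ)
    (hHS : ∀ n ≥ N, (H n : ℤ) =
      ∑ i ∈ Finset.range (d + 1),
        (-1) ^ i * e i * ((n + d - i).choose (d - i) : ℤ)) :
    ∀ n : ℕ, (H n : ℤ) =
      e 0 * ((n + d).choose d : ℤ) -
        (e 0 - (H 0 : ℤ)) * ((n + d - 1).choose (d - 1) : ℤ) - (s n : ℤ) := by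
  subst hQ
  obtain ⟨r, hr⟩ := hred
  obtain ⟨as, hlen, has, hspan⟩ := hCM.exists_isWeaklyRegular_ofList_eq_span_range
    (hI.of_pow_le hQI (hr.trans_le Ideal.mul_le_left))
  rw [← hspan] at hQI hr hs
  exact hilbert_function_via_sally_general hd has hlen hQI ⟨r, hr⟩ hH hs hHS
end

section
/- Let $(A, \mathfrak{m})$ be a Cohen-Macaulay local ring of dimension $d > 0$ with infinite residue field and $I$ an $\mathfrak{m}$-primary ideal with Hilbert coefficients $e_0, e_1$. Then $e_1 \geq e_0 - \ell_A(A/I)$ (Northcott's inequality). -/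
open IsLocalRing

/-!
Let `M` be a finite module of depth at least `d` whose Hilbert–Samuel function
`H n = ℓ(M / Iⁿ⁺¹M)` is eventually the polynomial with coefficients `e₀, …, e_d`. As the residue
field is infinite, `I` contains a superficial `M`-regular element `x`. With `M' = M / xM`, the
Artin–Rees lemma shows that `0 → M / IⁿM → M / Iⁿ⁺¹M → M' / Iⁿ⁺¹M' → 0` is exact for large `n`, so
by Pascal's rule the coefficients of `M'` are `e₀, …, e_{d-1}`; moreover `ℓ(M' / IM') = ℓ(M / IM)`
because `x ∈ I`. This reduces to `d = 1`. There the Hilbert–Samuel function of `M'` increases to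
the constant `e₀` and bounds the differences of `H`, so that `H n ≤ H 0 + n e₀`, to be compared
with `H n = (n + 1) e₀ - e₁` for large `n`.
-/

open Filter

lemma infinite_of_infinite_residueField (A M : Type*) [CommRing A] [IsLocalRing A]
    [Infinite (ResidueField A)] [AddCommGroup M] [Module A M] [Nontrivial M] : Infinite M := by
  obtain ⟨z, hz⟩ := exists_ne (0 : M)
  have hker : (LinearMap.toSpanSingleton A M z).ker ≤ maximalIdeal A :=
    le_maximalIdeal fun h => hz <| by
      simpa using (Ideal.eq_top_iff_one (LinearMap.toSpanSingleton A M z).ker).1 h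
  have : Infinite (A ⧸ (LinearMap.toSpanSingleton A M z).ker) :=
    Infinite.of_surjective (β := ResidueField A) _ (Ideal.Quotient.factor_surjective hker)
  exact Infinite.of_injective _
    (LinearMap.ker_eq_bot.1 (Submodule.ker_liftQ_eq_bot' _ (LinearMap.toSpanSingleton A M z) rfl))

lemma exists_forall_notMem_of_finite {A M : Type*} [CommRing A] [IsLocalRing A]
    [Infinite (ResidueField A)] [AddCommGroup M] [Module A M] {S : Set (Submodule A M)}
    (hS : S.Finite) (hne : ∀ N ∈ S, N ≠ ⊤) : ∃ x, ∀ N ∈ S, x ∉ N := by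
  by_contra! hcover
  obtain ⟨N, hN, hfi⟩ := Submodule.exists_finiteIndex_of_cover (p := id) (s := hS.toFinset)
    (Set.eq_univ_of_forall fun x => by simpa using hcover x)
  rw [id_eq] at hfi
  have : Finite (M ⧸ N) := AddSubgroup.finite_quotient_of_finiteIndex (H := N.toAddSubgroup)
  have : Nontrivial (M ⧸ N) :=
    Submodule.Quotient.nontrivial_iff.2 (hne N (hS.mem_toFinset.1 hN))
  exact (infinite_of_infinite_residueField A (M ⧸ N)).not_finite inferInstance

/-- In a primary decomposition of `K`, the components whose radical contains `𝔞` contain `𝔞 ^ c • ⊤`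
for large `c`, and multiplication by an element outside the other radicals is injective modulo the
other components. -/
lemma exists_finite_forall_mem_of_smul_mem {R G : Type*} [CommRing R] [IsNoetherianRing R]
    [AddCommGroup G] [Module R G] [IsNoetherian R G] (𝔞 : Ideal R) (K : Submodule R G) :
    ∃ P : Set (Ideal R), P.Finite ∧ (∀ p ∈ P, ¬𝔞 ≤ p) ∧
      ∃ c, ∀ r, (∀ p ∈ P, r ∉ p) → ∀ y ∈ 𝔞 ^ c • (⊤ : Submodule R G), r • y ∈ K → y ∈ K := by
  obtain ⟨s, rfl, hs⟩ := Submodule.isLasker R G K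
  obtain ⟨c, hc⟩ : ∃ c, ∀ J ∈ s, 𝔞 ≤ (J.colon Set.univ).radical →
      𝔞 ^ c • (⊤ : Submodule R G) ≤ J := by
    refine ((eventually_all_finset s).2 fun J _ => ?_ : ∀ᶠ c in atTop, _).exists
    by_cases h𝔞 : 𝔞 ≤ (J.colon Set.univ).radical
    · obtain ⟨k, hk⟩ := Ideal.exists_pow_le_of_le_radical_of_fg h𝔞 (IsNoetherian.noetherian 𝔞)
      filter_upwards [eventually_ge_atTop k] with c hkc _
      refine Submodule.smul_le.2 fun r hr y _ => ?_
      exact Submodule.mem_colon.1 (hk (Ideal.pow_le_pow_right hkc hr)) y trivial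
    · exact .of_forall fun _ h => absurd h h𝔞
  refine ⟨((fun J : Submodule R G => (J.colon Set.univ).radical) '' s) ∩ {p | ¬𝔞 ≤ p},
    (s.finite_toSet.image _).inter_of_left _, fun _ hp => hp.2, c, fun r hr y hy hry => ?_⟩
  simp only [Submodule.mem_finsetInf, id_eq] at hry ⊢
  intro J hJ
  by_cases h𝔞 : 𝔞 ≤ (J.colon Set.univ).radical
  · exact hc J hJ h𝔞 hy
  · exact ((hs hJ).mem_or_mem (hry J hJ)).resolve_right (hr _ ⟨⟨J, hJ, rfl⟩, h𝔞⟩)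

/-- The element `x` of `I` is superficial for `I` with respect to `M`: for some `c` and all `n ≥ c`,
`(Iⁿ⁺¹M : x) ∩ IᶜM = IⁿM`. Only the inclusion that is not automatic is recorded. -/
def IsSuperficial {A : Type*} [CommRing A] (I : Ideal A)
    (M : Type*) [AddCommGroup M] [Module A M] (x : A) : Prop :=
  x ∈ I ∧ ∃ c, ∀ n ≥ c, ∀ y ∈ (I ^ c • ⊤ : Submodule A M),
    x • y ∈ (I ^ (n + 1) • ⊤ : Submodule A M) → y ∈ (I ^ n • ⊤ : Submodule A M)

section Superficial

variable {A : Type*} [CommRing A] {M : Type*} [AddCommGroup M] [Module A M]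

/-- The identification of `I` with the degree one component `I t` of the Rees algebra of `I`. -/
noncomputable def reesAlgebraDegreeOne (I : Ideal A) : I →ₗ[A] reesAlgebra I :=
  ((Polynomial.monomial 1).comp I.subtype).codRestrict
    (Subalgebra.toSubmodule (reesAlgebra I)) fun x => by
      simpa using reesAlgebra.monomial_mem.2 (show (x : A) ∈ I ^ 1 by simp)

lemma reesAlgebraDegreeOne_smul_single {I : Ideal A} (x : I) (n : ℕ) (y : M) :
    reesAlgebraDegreeOne I x • PolynomialModule.single A n y =
      PolynomialModule.single A (n + 1) ((x : A) • y) := by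
  rw [add_comm n]
  exact PolynomialModule.monomial_smul_single 1 (x : A) n y

lemma single_mem_filtration_submodule {I : Ideal A} {F : I.Filtration M} {n : ℕ} {y : M} :
    PolynomialModule.single A n y ∈ F.submodule ↔ y ∈ F.N n := by
  rw [Ideal.Filtration.mem_submodule]
  refine ⟨fun h => by simpa using h n, fun hy i => ?_⟩
  obtain rfl | hi := eq_or_ne n i
  · simpa using hy
  · simp [Finsupp.single_eq_of_ne' hi]

lemma single_mem_pow_smul_submodule {I : Ideal A} {c n : ℕ} (hcn : c ≤ n) {y : M}
    (hy : y ∈ (I ^ n • ⊤ : Submodule A M)) :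
    PolynomialModule.single A n y ∈
      Ideal.span (Set.range (reesAlgebraDegreeOne I)) ^ c • (I.stableFiltration ⊤).submodule := by
  induction c generalizing n y with
  | zero =>
    rw [pow_zero, Ideal.one_eq_top, Submodule.top_smul]
    exact single_mem_filtration_submodule.2 hy
  | succ c ih =>
    obtain ⟨n, rfl⟩ := Nat.exists_eq_add_of_le' (Nat.one_le_of_lt hcn)
    rw [pow_succ', Submodule.mul_smul] at hy ⊢
    refine Submodule.smul_induction_on hy (fun a ha z hz => ?_) fun y₁ y₂ h₁ h₂ => ?_
    · rw [← reesAlgebraDegreeOne_smul_single ⟨a, ha⟩]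
      exact Submodule.smul_mem_smul (Ideal.subset_span ⟨_, rfl⟩)
        (ih (Nat.le_of_succ_le_succ hcn) hz)
    · rw [PolynomialModule.single_add]
      exact add_mem h₁ h₂

variable [IsNoetherianRing A] [Module.Finite A M]

variable (M) in
lemma exists_finite_forall_mem_pow_smul (I : Ideal A) :
    ∃ S : Set (Submodule A I), S.Finite ∧ (∀ N ∈ S, N ≠ ⊤) ∧
      ∃ c, ∀ x : I, (∀ N ∈ S, x ∉ N) → ∀ n ≥ c, ∀ y ∈ (I ^ n • ⊤ : Submodule A M),
        (x : A) • y ∈ (I ^ (n + 2) • ⊤ : Submodule A M) →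
          y ∈ (I ^ (n + 1) • ⊤ : Submodule A M) := by
  -- `G = ⨁ IⁿM tⁿ` and `F.submodule = ⨁ Iⁿ⁺¹M tⁿ`, so `G / F.submodule` is the associated graded
  -- module and the ideal `𝔞` is generated by `I t`.
  let 𝔞 : Ideal (reesAlgebra I) := Ideal.span (Set.range (reesAlgebraDegreeOne I))
  let G := (I.stableFiltration (⊤ : Submodule A M)).submodule
  let F := I.stableFiltration (I • ⊤ : Submodule A M)
  have : IsNoetherian (reesAlgebra I) G := isNoetherian_of_fg_of_noetherian _ <|
    (Ideal.Filtration.submodule_fg_iff_stable _ fun _ => IsNoetherian.noetherian _).2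
      (I.stableFiltration_stable ⊤)
  have mem_F (n : ℕ) (z : M) :
      PolynomialModule.single A n z ∈ F.submodule ↔ z ∈ (I ^ (n + 1) • ⊤ : Submodule A M) := by
    rw [single_mem_filtration_submodule, pow_succ, Submodule.mul_smul]
    rfl
  obtain ⟨P, hPfin, hP, c, hc⟩ := exists_finite_forall_mem_of_smul_mem (G := G) 𝔞
    (F.submodule.submoduleOf G)
  refine ⟨(fun p => (p.restrictScalars A).comap (reesAlgebraDegreeOne I)) '' P, hPfin.image _,
    ?_, c, fun x hx n hn y hy hxy => ?_⟩
  · rintro _ ⟨p, hp, rfl⟩ htop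
    refine hP p hp (Ideal.span_le.2 ?_)
    rintro _ ⟨x, rfl⟩
    exact htop.ge (Submodule.mem_top (x := x))
  · obtain ⟨g, hg, hgy⟩ : ∃ g ∈ 𝔞 ^ c • (⊤ : Submodule (reesAlgebra I) G),
        (g : PolynomialModule A M) = PolynomialModule.single A n y := by
      have := single_mem_pow_smul_submodule hn hy
      rwa [← Submodule.range_subtype (I.stableFiltration ⊤).submodule, ← Submodule.map_top,
        ← Submodule.map_smul''] at this
    have hxg : reesAlgebraDegreeOne I x • g ∈ F.submodule.submoduleOf G := by
      rw [Submodule.submoduleOf, Submodule.mem_comap, Submodule.subtype_apply,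
        Submodule.coe_smul, hgy, reesAlgebraDegreeOne_smul_single, mem_F]
      exact hxy
    have := hc _ (fun p hp hxp => hx _ ⟨p, hp, rfl⟩ hxp) g hg hxg
    rwa [Submodule.submoduleOf, Submodule.mem_comap, Submodule.subtype_apply, hgy, mem_F] at this

variable (M) in
lemma exists_isSuperficial [IsLocalRing A] [Infinite (ResidueField A)] (I : Ideal A)
    {S : Set (Ideal A)} (hS : S.Finite) (hIS : ∀ p ∈ S, ¬I ≤ p) :
    ∃ x, IsSuperficial I M x ∧ ∀ p ∈ S, x ∉ p := by
  obtain ⟨T, hT, hTtop, c, hc⟩ := exists_finite_forall_mem_pow_smul M I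
  obtain ⟨x, hx⟩ : ∃ x : I, ∀ N ∈ T ∪ Submodule.comap I.subtype '' S, x ∉ N := by
    refine exists_forall_notMem_of_finite (hT.union (hS.image _)) ?_
    rintro _ (hN | ⟨p, hp, rfl⟩)
    · exact hTtop _ hN
    · exact fun h => hIS p hp (Submodule.comap_subtype_eq_top.1 h)
  refine ⟨x, ⟨x.2, c, fun n hn y hy hxy => ?_⟩, fun p hp => hx _ (.inr ⟨p, hp, rfl⟩)⟩
  induction n, hn using Nat.le_induction with
  | base => exact hy
  | succ n hn ih =>
    exact hc x (fun N hN => hx N (.inl hN)) n hn y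
      (ih (Submodule.smul_mono_left (Ideal.pow_le_pow_right (n + 1).le_succ) hxy)) hxy

variable {I : Ideal A} {x : A}

lemma IsSuperficial.eventually_mem_pow_smul (hx : IsSuperficial I M x)
    (hreg : IsSMulRegular M x) :
    ∀ᶠ n in atTop, ∀ y, x • y ∈ (I ^ (n + 1) • ⊤ : Submodule A M) →
      y ∈ (I ^ n • ⊤ : Submodule A M) := by
  obtain ⟨-, c, hc⟩ := hx
  obtain ⟨k, hk⟩ := I.exists_pow_inf_eq_pow_smul (LinearMap.lsmul A M x).range
  filter_upwards [eventually_ge_atTop (k + c)] with n hn y hxy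
  refine hc n (le_of_add_le_right hn) y ?_ hxy
  have hxy' : x • y ∈ (I ^ c • ⊤ : Submodule A M).map (LinearMap.lsmul A M x) := by
    have hmem : x • y ∈ I ^ (n + 1) • ⊤ ⊓ (LinearMap.lsmul A M x).range := ⟨hxy, y, rfl⟩
    rw [hk (n + 1) (by omega)] at hmem
    rw [Submodule.map_smul'', Submodule.map_top]
    exact Submodule.smul_mono (Ideal.pow_le_pow_right (by omega)) inf_le_right hmem
  obtain ⟨z, hz, hzy⟩ := hxy'
  exact hreg hzy ▸ hz

end Superficial

section Length

variable {R M N P : Type*} [CommRing R] [AddCommGroup M] [Module R M] [AddCommGroup N]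
  [Module R N] [AddCommGroup P] [Module R P]

lemma length_quotient_anti {p q : Submodule R M} (h : p ≤ q) :
    Module.length R (M ⧸ q) ≤ Module.length R (M ⧸ p) :=
  Module.length_le_of_surjective _ (Submodule.factor_surjective h)

lemma length_quotient_eq_add_of_exact {f : M →ₗ[R] N} {g : N →ₗ[R] P}
    (hfg : Function.Exact f g) (hg : Function.Surjective g) (q : Submodule R N) :
    Module.length R (N ⧸ q) =
      Module.length R (M ⧸ q.comap f) + Module.length R (P ⧸ q.map g) := by
  refine Module.length_eq_add_of_exact ((q.comap f).mapQ q f le_rfl)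
    (q.mapQ (q.map g) g (Submodule.le_comap_map g q)) ?_ ?_
    ((hfg.exact_mapQ_iff le_rfl (Submodule.le_comap_map g q)).2 inf_le_right)
  · exact LinearMap.ker_eq_bot.1 (Submodule.ker_liftQ_eq_bot' _ _ (by simp [LinearMap.ker_comp]))
  · rw [← LinearMap.range_eq_top, Submodule.range_mapQ, LinearMap.range_eq_top.2 hg,
      Submodule.map_top, Submodule.range_mkQ]

lemma length_quotient_smul_top_eq_add (J : Ideal R) (x : R) :
    Module.length R (M ⧸ (J • ⊤ : Submodule R M)) =
      Module.length R (M ⧸ (J • ⊤ : Submodule R M).comap (LinearMap.lsmul R M x)) +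
        Module.length R (QuotSMulTop x M ⧸ (J • ⊤ : Submodule R (QuotSMulTop x M))) := by
  rw [length_quotient_eq_add_of_exact (LinearMap.exact_lsmul_mkQ_smul_top M x)
    (Submodule.mkQ_surjective _), Submodule.map_smul'', Submodule.map_top, Submodule.range_mkQ]

lemma length_quotSMulTop_eq_of_mem {J : Ideal R} {x : R} (hx : x ∈ J) :
    Module.length R (QuotSMulTop x M ⧸ (J • ⊤ : Submodule R (QuotSMulTop x M))) =
      Module.length R (M ⧸ (J • ⊤ : Submodule R M)) := by
  have htop : (J • ⊤ : Submodule R M).comap (LinearMap.lsmul R M x) = ⊤ :=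
    eq_top_iff.2 fun y _ => Submodule.smul_mem_smul hx trivial
  rw [length_quotient_smul_top_eq_add (M := M) J x, htop,
    Module.length_eq_zero (M := M ⧸ (⊤ : Submodule R M)), zero_add]

lemma pow_smul_top_le_comap_lsmul {I : Ideal R} {x : R} (hx : x ∈ I) (n : ℕ) :
    (I ^ n • ⊤ : Submodule R M) ≤
      (I ^ (n + 1) • ⊤ : Submodule R M).comap (LinearMap.lsmul R M x) := fun y hy => by
  rw [pow_succ', Submodule.mul_smul]
  exact Submodule.smul_mem_smul hx hy

end Length

section Depth

universe u v

open RingTheory.Sequence CategoryTheory Abelian Pointwise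

variable {R : Type u} [CommRing R] {M : Type v} [AddCommGroup M] [Module R M]

lemma smul_top_quotSMulTop_ne_top {J : Ideal R} {x : R} (hx : x ∈ J)
    (hJ : (J • ⊤ : Submodule R M) ≠ ⊤) : (J • ⊤ : Submodule R (QuotSMulTop x M)) ≠ ⊤ := by
  have hle : x • (⊤ : Submodule R M) ≤ J • ⊤ := by
    rw [← Submodule.ideal_span_singleton_smul]
    exact Submodule.smul_mono_left ((Ideal.span_singleton_le_iff_mem J).2 hx)
  rwa [← Submodule.range_mkQ (x • (⊤ : Submodule R M)), ← Submodule.map_top,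
    ← Submodule.map_smul'', Submodule.map_top, Submodule.range_mkQ, Ne, Submodule.map_mkQ_eq_top,
    sup_eq_right.2 hle]

/-- The long exact sequence of `Ext (R ⧸ J) -` shows that the `J`-depth drops by at most one modulo
a regular element, by Rees' characterisation of depth. -/
lemma exists_isRegular_quotSMulTop [Small.{v} R] [IsNoetherianRing R] [Module.Finite R M]
    {J : Ideal R} (hJ : (J • ⊤ : Submodule R M) ≠ ⊤) {d : ℕ}
    (hM : ∃ rs : List R, rs.length = d + 1 ∧ (∀ r ∈ rs, r ∈ J) ∧ IsRegular M rs)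
    {x : R} (hxJ : x ∈ J) (hx : IsSMulRegular M x) :
    ∃ rs : List R, rs.length = d ∧ (∀ r ∈ rs, r ∈ J) ∧ IsRegular (QuotSMulTop x M) rs := by
  let S := (ModuleCat.of R M).smulShortComplex x
  let k := ModuleCat.of R (Shrink.{v} (R ⧸ J))
  have hExt := (((ModuleCat.of R M).exists_isRegular_tfae J (d + 1) hJ.lt_top).out 3 1).1 hM
  refine (((ModuleCat.of R (QuotSMulTop x M)).exists_isRegular_tfae J d
    (smul_top_quotSMulTop_ne_top hxJ hJ).lt_top).out 3 1).2 fun i hi => ?_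
  have : Subsingleton (Ext k S.X₂ i) := hExt i (hi.trans d.lt_succ_self)
  have : Subsingleton (Ext k S.X₁ (i + 1)) := hExt (i + 1) (Nat.succ_lt_succ hi)
  refine subsingleton_of_forall_eq (0 : Ext k S.X₃ i) fun e => ?_
  obtain ⟨e', rfl⟩ := Ext.covariant_sequence_exact₃ k (S := S)
    (IsSMulRegular.smulShortComplex_shortExact hx) e rfl (Subsingleton.elim _ _)
  rw [Subsingleton.elim e' 0, Ext.zero_comp]

end Depth

section HilbertSamuel

/-- The statement that `H n` is the length of `M ⧸ I ^ (n + 1) M`, with the shift by one in the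
exponent that is customary for the Hilbert–Samuel function. -/
def IsHilbertSamuelFunction {A : Type*} [CommRing A] (I : Ideal A) (M : Type*) [AddCommGroup M]
    [Module A M] (H : ℕ → ℕ) : Prop :=
  ∀ n, Module.length A (M ⧸ (I ^ (n + 1) • ⊤ : Submodule A M)) = H n

namespace IsHilbertSamuelFunction

variable {A : Type*} [CommRing A] {I : Ideal A} {M : Type*} [AddCommGroup M] [Module A M]
  {H : ℕ → ℕ}

lemma monotone (hH : IsHilbertSamuelFunction I M H) : Monotone H := fun m n hmn => by
  have := length_quotient_anti (Submodule.smul_mono_left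
    (Ideal.pow_le_pow_right (I := I) (Nat.succ_le_succ hmn)) : _ ≤ (_ • ⊤ : Submodule A M))
  rw [hH, hH] at this
  exact_mod_cast this

lemma exists_quotSMulTop (hH : IsHilbertSamuelFunction I M H) (x : A) :
    ∃ H', IsHilbertSamuelFunction I (QuotSMulTop x M) H' := by
  have hfin (n : ℕ) : Module.length A
      (QuotSMulTop x M ⧸ (I ^ (n + 1) • ⊤ : Submodule A (QuotSMulTop x M))) ≠ ⊤ :=
    ne_top_of_le_ne_top (ENat.natCast_ne_top (H n)) <| by
      rw [← hH n, length_quotient_smul_top_eq_add (M := M) _ x]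
      exact le_add_self
  exact ⟨fun n => (Module.length A _).toNat, fun n => (ENat.natCast_toNat (hfin n)).symm⟩

end IsHilbertSamuelFunction

/-- The value at `n` of the Hilbert–Samuel polynomial of degree `d` with coefficients `e`. -/
def hilbertSamuelEval (e : ℕ → ℤ) (d n : ℕ) : ℤ :=
  ∑ i ∈ Finset.range (d + 1), (-1) ^ i * e i * ((n + d - i).choose (d - i) : ℤ)

lemma hilbertSamuelEval_zero (e : ℕ → ℤ) (n : ℕ) : hilbertSamuelEval e 0 n = e 0 := by
  simp [hilbertSamuelEval]

lemma hilbertSamuelEval_one (e : ℕ → ℤ) (n : ℕ) :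
    hilbertSamuelEval e 1 n = (n + 1) * e 0 - e 1 := by
  simp [hilbertSamuelEval, Finset.sum_range_succ]
  ring

lemma hilbertSamuelEval_succ_succ (e : ℕ → ℤ) (d n : ℕ) :
    hilbertSamuelEval e (d + 1) (n + 1) =
      hilbertSamuelEval e (d + 1) n + hilbertSamuelEval e d (n + 1) := by
  have pascal : ∀ i ∈ Finset.range (d + 1),
      (-1) ^ i * e i * ((n + 1 + (d + 1) - i).choose (d + 1 - i) : ℤ) =
        (-1) ^ i * e i * ((n + (d + 1) - i).choose (d + 1 - i) : ℤ) +
          (-1) ^ i * e i * ((n + 1 + d - i).choose (d - i) : ℤ) := fun i hi => by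
    obtain ⟨k, rfl⟩ := Nat.exists_eq_add_of_le (Finset.mem_range_succ_iff.1 hi)
    rw [show n + 1 + (i + k + 1) - i = n + 1 + k + 1 by omega, show i + k + 1 - i = k + 1 by omega,
      show n + (i + k + 1) - i = n + 1 + k by omega, show n + 1 + (i + k) - i = n + 1 + k by omega,
      show i + k - i = k by omega, Nat.choose_succ_succ]
    push_cast
    ring
  simp only [hilbertSamuelEval, Finset.sum_range_succ _ (d + 1), Finset.sum_congr rfl pascal,
    Finset.sum_add_distrib, Nat.sub_self, Nat.choose_zero_right]
  ring

lemma eventually_eq_hilbertSamuelEval {H H' : ℕ → ℕ} {e : ℕ → ℤ} {d : ℕ}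
    (hH : ∀ᶠ n in atTop, (H n : ℤ) = hilbertSamuelEval e (d + 1) n)
    (hadd : ∀ᶠ n in atTop, H (n + 1) = H n + H' (n + 1)) :
    ∀ᶠ n in atTop, (H' n : ℤ) = hilbertSamuelEval e d n := by
  rw [← map_add_atTop_eq_nat 1, eventually_map]
  filter_upwards [hH, (tendsto_add_atTop_nat 1).eventually hH, hadd] with n hn hn' hn_add
  rw [hilbertSamuelEval_succ_succ, ← hn, hn_add] at hn'
  push_cast at hn'
  linarith

lemma sub_le_of_eventually_eq_hilbertSamuelEval {H H' : ℕ → ℕ} {e : ℕ → ℤ}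
    (hle : ∀ n, H (n + 1) ≤ H n + H' (n + 1)) (hmono : Monotone H')
    (hH' : ∀ᶠ n in atTop, (H' n : ℤ) = hilbertSamuelEval e 0 n)
    (hH : ∀ᶠ n in atTop, (H n : ℤ) = hilbertSamuelEval e 1 n) :
    e 0 - H 0 ≤ e 1 := by
  have H'_le (n : ℕ) : (H' n : ℤ) ≤ e 0 := by
    obtain ⟨m, hm, hnm⟩ := (hH'.and (eventually_ge_atTop n)).exists
    rw [← hilbertSamuelEval_zero e m, ← hm]
    exact_mod_cast hmono hnm
  have H_le (n : ℕ) : (H n : ℤ) ≤ H 0 + n * e 0 := by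
    induction n with
    | zero => simp
    | succ n ih =>
      have := H'_le (n + 1)
      have : (H (n + 1) : ℤ) ≤ H n + H' (n + 1) := mod_cast hle n
      push_cast
      linarith
  obtain ⟨n, hn⟩ := hH.exists
  rw [hilbertSamuelEval_one] at hn
  linarith [H_le n]

end HilbertSamuel

section Northcott

universe u v

open RingTheory.Sequence

variable {A : Type u} [CommRing A] [IsNoetherianRing A] {M : Type v} [AddCommGroup M] [Module A M]

variable [Module.Finite A M] {I : Ideal A}

lemma exists_isSuperficial_isSMulRegular [IsLocalRing A] [Infinite (ResidueField A)] {r : A}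
    (hr : r ∈ I.radical) (hreg : IsSMulRegular M r) :
    ∃ x, IsSuperficial I M x ∧ IsSMulRegular M x := by
  have isSMulRegular_iff (a : A) : IsSMulRegular M a ↔ ∀ p ∈ associatedPrimes A M, a ∉ p := by
    simpa using (Set.ext_iff.1 (biUnion_associatedPrimes_eq_compl_regular A M) a).not.symm
  obtain ⟨x, hx, hxp⟩ := exists_isSuperficial M I (associatedPrimes.finite A M) fun p hp hIp =>
    (isSMulRegular_iff r).1 hreg p hp (hp.isPrime.radical_le_iff.2 hIp hr)
  exact ⟨x, hx, (isSMulRegular_iff x).2 hxp⟩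

variable {x : A} {H : ℕ → ℕ}

lemma exists_hilbertSamuelEval_quotSMulTop (hx : IsSuperficial I M x) (hreg : IsSMulRegular M x)
    (hH : IsHilbertSamuelFunction I M H) {d : ℕ} {e : ℕ → ℤ}
    (hHS : ∀ᶠ n in atTop, (H n : ℤ) = hilbertSamuelEval e (d + 1) n) :
    ∃ H', IsHilbertSamuelFunction I (QuotSMulTop x M) H' ∧
      (∀ᶠ n in atTop, (H' n : ℤ) = hilbertSamuelEval e d n) ∧ H' 0 = H 0 ∧
      ∀ n, H (n + 1) ≤ H n + H' (n + 1) := by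
  obtain ⟨H', hH'⟩ := hH.exists_quotSMulTop x
  have hsplit (n : ℕ) := length_quotient_smul_top_eq_add (M := M) (I ^ (n + 1 + 1)) x
  have hcomap (n : ℕ) := pow_smul_top_le_comap_lsmul (M := M) hx.1 (n + 1)
  refine ⟨H', hH', eventually_eq_hilbertSamuelEval hHS ?_, ?_, fun n => ?_⟩
  · filter_upwards [(tendsto_add_atTop_nat 1).eventually (hx.eventually_mem_pow_smul hreg)]
      with n hn
    have := hsplit n
    rw [← le_antisymm (hcomap n) fun y => hn y, hH, hH, hH'] at this
    exact_mod_cast this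
  · have := length_quotSMulTop_eq_of_mem (M := M) (J := I ^ (0 + 1)) (by simpa using hx.1)
    rw [hH, hH'] at this
    exact_mod_cast this
  · have := (hsplit n).trans_le (add_le_add_left (length_quotient_anti (hcomap n)) _)
    rw [hH, hH, hH'] at this
    exact_mod_cast this

theorem northcott_general [IsLocalRing A] [Infinite (ResidueField A)] [Small.{v} A] {d : ℕ}
    (hd : 0 < d)
    (hM : ∃ rs : List A, rs.length = d ∧ (∀ r ∈ rs, r ∈ maximalIdeal A) ∧ IsRegular M rs)
    (hI : IsPrimaryToMax A I) (hH : IsHilbertSamuelFunction I M H) {e : ℕ → ℤ}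
    (hHS : ∀ᶠ n in atTop, (H n : ℤ) = hilbertSamuelEval e d n) :
    e 1 ≥ e 0 - H 0 := by
  induction d using Nat.strong_induction_on generalizing M H with | _ d ih
  obtain ⟨d, rfl⟩ := Nat.exists_eq_add_of_le' hd
  have ⟨rs, hlen, hmem, hrs⟩ := hM
  obtain ⟨r, rs, rfl⟩ := List.exists_cons_of_length_eq_add_one hlen
  obtain ⟨x, hx, hreg⟩ := exists_isSuperficial_isSMulRegular
    (hI.2 (hmem r List.mem_cons_self)) ((isRegular_cons_iff _ _ _).1 hrs).1
  obtain ⟨H', hH', hHS', hzero, hle⟩ := exists_hilbertSamuelEval_quotSMulTop hx hreg hH hHS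
  obtain rfl | hd' := d.eq_zero_or_pos
  · exact sub_le_of_eventually_eq_hilbertSamuelEval hle hH'.monotone hHS' hHS
  · have := hrs.nontrivial
    have htop := Submodule.top_ne_ideal_smul_of_le_jacobson_annihilator (M := M)
      (maximalIdeal_le_jacobson (Module.annihilator A M))
    rw [← hzero]
    exact ih d d.lt_succ_self hd' (exists_isRegular_quotSMulTop htop.symm hM (hI.1 hx.1) hreg)
      hH' hHS'

end Northcott

/-- Northcott's inequality: `e₁ ≥ e₀ - ℓ_A(A/I)`.  Here `H n = ℓ_A(A/I^{n+1})` and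
the Hilbert coefficients `e i` are specified by the Hilbert–Samuel polynomial;
note `H 0 = ℓ_A(A/I)`. -/
theorem northcott (A : Type*) [CommRing A] [IsLocalRing A] [IsNoetherianRing A]
    [Infinite (ResidueField A)]
    (d : ℕ) (hd : 0 < d) (hCM : IsCohenMacaulayLocal A d)
    (I : Ideal A) (hI : IsPrimaryToMax A I)
    (H : ℕ → ℕ)
    (hH : ∀ n : ℕ, moduleLength A (A ⧸ I ^ (n + 1)) = (H n : ℕ∞))
    (e : ℕ → ℤ) (N : ℕ)
    (hHS : ∀ n ≥ N, (H n : ℤ) =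
      ∑ i ∈ Finset.range (d + 1),
        (-1) ^ i * e i * ((n + d - i).choose (d - i) : ℤ)) :
    e 1 ≥ e 0 - (H 0 : ℤ) := by
  refine northcott_general hd hCM.2 hI (fun n => ?_) (eventually_atTop.2 ⟨N, hHS⟩)
  rw [smul_eq_mul, Ideal.mul_top]
  exact WithBot.coe_injective ((Module.coe_length A _).trans (hH n))
end
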